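/- Let (Ω,Σ,η) be a finite measure space and suppose {gₙ} ⊆ L¹(η) converges to 0 weakly in L¹(η). Then there exists a subsequence {g''ₙ} of {gₙ} such that, for every further subsequence {g'''ₙ} of {g''ₙ}, the arithmetic means (1/n)∑_{k=1}^n g'''ₖ(x) converge to 0 for η-almost every x ∈ Ω. -/

import Mathlib

open MeasureTheory Filter Topology
open scoped ENNReal

noncomputable section

namespace Paper

variable {Ω : Type*} [MeasurableSpace Ω]
variable {X : Type*} [NormedAddCommGroup X] [NormedSpace ℝ X]

/-- The signed measure `x* ∘ m` for a functional `x*` and vector measure `m`. -/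
def dualApply (m : VectorMeasure Ω X) (x : X →L[ℝ] ℝ) : SignedMeasure Ω :=
  m.mapRange x.toLinearMap.toAddMonoidHom x.continuous

/-- The semivariation `‖m‖(A)` of a vector measure. -/
def semivar (m : VectorMeasure Ω X) (A : Set Ω) : ℝ≥0∞ :=
  ⨆ x : {x : X →L[ℝ] ℝ // ‖x‖ ≤ 1}, (dualApply m x.1).totalVariation A

/-- `P` holds `‖m‖`-almost everywhere. -/
def MAE (m : VectorMeasure Ω X) (P : Ω → Prop) : Prop :=
  ∃ N : Set Ω, MeasurableSet N ∧ semivar m N = 0 ∧ ∀ ω ∉ N, P ω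

/-- The integral `∫_A f ds` of a real function with respect to a signed measure. -/
def sIntegral (s : SignedMeasure Ω) (f : Ω → ℝ) (A : Set Ω) : ℝ :=
  (∫ ω in A, f ω ∂s.toJordanDecomposition.posPart) -
    ∫ ω in A, f ω ∂s.toJordanDecomposition.negPart

/-- `f` is integrable with respect to the vector measure `m` (Bartle-Dunford-Schwartz). -/
def MIntegrable (m : VectorMeasure Ω X) (f : Ω → ℝ) : Prop :=
  Measurable f ∧
  (∀ x : X →L[ℝ] ℝ, Integrable f ((dualApply m x).totalVariation)) ∧
  (∀ A : Set Ω, MeasurableSet A →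
    ∃ v : X, ∀ x : X →L[ℝ] ℝ, x v = sIntegral (dualApply m x) f A)

open Classical in
/-- The vector integral `∫_A f dm ∈ X`. -/
def mIntegral (m : VectorMeasure Ω X) (f : Ω → ℝ) (A : Set Ω) : X :=
  if h : ∃ v : X, ∀ x : X →L[ℝ] ℝ, x v = sIntegral (dualApply m x) f A then h.choose
  else 0

/-- The norm of `L¹(m)`: `‖f‖ = sup_{‖x*‖ ≤ 1} ∫ |f| d|x*m|`. -/
def mNorm (m : VectorMeasure Ω X) (f : Ω → ℝ) : ℝ :=
  ⨆ x : {x : X →L[ℝ] ℝ // ‖x‖ ≤ 1}, ∫ ω, |f ω| ∂(dualApply m x.1).totalVariation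

/-- The vector measure `m` is separable: the pseudometric space `(Σ, d_m)`,
`d_m(A,B) = ‖m‖(A △ B)`, is separable. -/
def SeparableVM (m : VectorMeasure Ω X) : Prop :=
  ∃ D : Set (Set Ω), D.Countable ∧ (∀ B ∈ D, MeasurableSet B) ∧
    ∀ A : Set Ω, MeasurableSet A → ∀ ε : ℝ, 0 < ε →
      ∃ B ∈ D, semivar m (symmDiff A B) < ENNReal.ofReal ε

section FunctionSpace

variable {S : Type*} [MeasurableSpace S]

/-- `T` is a bounded linear functional on the function space determined by the
membership predicate `mem` and the norm `nrm`. -/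
def IsBddLinFunctional (mem : (S → ℝ) → Prop) (nrm : (S → ℝ) → ℝ)
    (T : (S → ℝ) → ℝ) : Prop :=
  (∀ f g, mem f → mem g → T (f + g) = T f + T g) ∧
  (∀ (c : ℝ) (f), mem f → T (c • f) = c * T f) ∧
  (∃ C : ℝ, ∀ f, mem f → |T f| ≤ C * nrm f)

/-- `f` is a weakly null sequence in the function space `(mem, nrm)`. -/
def WeaklyNullSeq (mem : (S → ℝ) → Prop) (nrm : (S → ℝ) → ℝ) (f : ℕ → S → ℝ) : Prop :=
  ∀ T : (S → ℝ) → ℝ, IsBddLinFunctional mem nrm T →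
    Tendsto (fun n => T (f n)) atTop (nhds 0)

/-- The set `K` has uniformly absolutely continuous norm in the function space with
norm `nrm` over the measure `μ`. -/
def UnifACNorm (μ : Measure S) (nrm : (S → ℝ) → ℝ) (K : Set (S → ℝ)) : Prop :=
  ∀ ε : ℝ, 0 < ε → ∃ δ : ℝ, 0 < δ ∧ ∀ A : Set S, MeasurableSet A →
    μ A < ENNReal.ofReal δ → ∀ f ∈ K, nrm (A.indicator f) ≤ ε

/-- The subsequence splitting property for the function space `(mem, nrm)` over `μ`. -/
def HasSSP (μ : Measure S) (mem : (S → ℝ) → Prop) (nrm : (S → ℝ) → ℝ) : Prop :=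
  ∀ f : ℕ → S → ℝ, (∀ n, mem (f n)) → (∃ C : ℝ, ∀ n, nrm (f n) ≤ C) →
    ∃ σ : ℕ → ℕ, StrictMono σ ∧
      ∃ g h : ℕ → S → ℝ,
        (∀ n, mem (g n)) ∧ (∀ n, mem (h n)) ∧
        (∀ n, f (σ n) = g n + h n) ∧
        (∀ n, (fun s => g n s * h n s) =ᵐ[μ] 0) ∧
        UnifACNorm μ nrm (Set.range g) ∧
        (∀ i j, i ≠ j → (fun s => h i s * h j s) =ᵐ[μ] 0)

/-- The weak Banach-Saks property for the function space `(mem, nrm)`. -/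
def HasWBS (mem : (S → ℝ) → Prop) (nrm : (S → ℝ) → ℝ) : Prop :=
  ∀ f : ℕ → S → ℝ, (∀ n, mem (f n)) → WeaklyNullSeq mem nrm f →
    ∃ σ : ℕ → ℕ, StrictMono σ ∧
      Tendsto (fun n : ℕ => nrm ((n : ℝ)⁻¹ • ∑ k ∈ Finset.range n, f (σ k))) atTop (nhds 0)

end FunctionSpace

/-- A Banach function space over `(S, μ)`: an (abstract) normed space `X` together with
a linear embedding `J` into measurable functions on `S`, separating points modulo
`μ`-null sets and satisfying the ideal property. -/
structure BFS (S : Type*) [MeasurableSpace S] (μ : Measure S)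
    (X : Type*) [NormedAddCommGroup X] [NormedSpace ℝ X] where
  J : X →ₗ[ℝ] (S → ℝ)
  aemeasurable : ∀ x : X, AEMeasurable (J x) μ
  eq_zero : ∀ x : X, J x =ᵐ[μ] 0 → x = 0
  ideal : ∀ (x : X) (g : S → ℝ), AEMeasurable g μ →
    (∀ᵐ s ∂μ, |g s| ≤ |J x s|) → ∃ y : X, J y =ᵐ[μ] g ∧ ‖y‖ ≤ ‖x‖

variable {S : Type*} [MeasurableSpace S] {μ : Measure S}

/-- The set `K ⊆ X` has uniformly absolutely continuous norm in the B.f.s. `X`. -/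
def BFS.UnifAC (B : BFS S μ X) (K : Set X) : Prop :=
  ∀ ε : ℝ, 0 < ε → ∃ δ : ℝ, 0 < δ ∧ ∀ A : Set S, MeasurableSet A →
    μ A < ENNReal.ofReal δ → ∀ x ∈ K, ∀ y : X, B.J y =ᵐ[μ] A.indicator (B.J x) → ‖y‖ ≤ ε

/-- The B.f.s. `X` has absolutely continuous norm. -/
def BFS.ACNorm (B : BFS S μ X) : Prop :=
  ∀ x : X, ∀ ε : ℝ, 0 < ε → ∃ δ : ℝ, 0 < δ ∧ ∀ A : Set S, MeasurableSet A →
    μ A < ENNReal.ofReal δ → ∀ y : X, B.J y =ᵐ[μ] A.indicator (B.J x) → ‖y‖ ≤ ε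

/-- The subsequence splitting property for the B.f.s. `X`. -/
def BFS.SSP (B : BFS S μ X) : Prop :=
  ∀ f : ℕ → X, (∃ C : ℝ, ∀ n, ‖f n‖ ≤ C) →
    ∃ σ : ℕ → ℕ, StrictMono σ ∧
      ∃ g h : ℕ → X,
        (∀ n, f (σ n) = g n + h n) ∧
        (∀ n, (fun s => B.J (g n) s * B.J (h n) s) =ᵐ[μ] 0) ∧
        B.UnifAC (Set.range g) ∧
        (∀ i j, i ≠ j → (fun s => B.J (h i) s * B.J (h j) s) =ᵐ[μ] 0)

/-- The weak Banach-Saks property for a normed space `Z`: every weakly null sequence has a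
subsequence whose arithmetic means converge to zero in norm. -/
def WeakBanachSaks (Z : Type*) [NormedAddCommGroup Z] [NormedSpace ℝ Z] : Prop :=
  ∀ z : ℕ → Z, (∀ φ : Z →L[ℝ] ℝ, Tendsto (fun n => φ (z n)) atTop (nhds 0)) →
    ∃ σ : ℕ → ℕ, StrictMono σ ∧
      Tendsto (fun n : ℕ => ‖(n : ℝ)⁻¹ • ∑ k ∈ Finset.range n, z (σ k)‖) atTop (nhds 0)


theorem kl_weak_limit {H : Type*} [NormedAddCommGroup H] [InnerProductSpace ℝ H] [CompleteSpace H]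
    (U : Ultrafilter ℕ) (x : ℕ → H) (B : ℝ) (hB : ∀ n, ‖x n‖ ≤ B) :
    ∃ h : H, ∀ z : H, Tendsto (fun n => inner ℝ z (x n)) U (𝓝 (inner ℝ z h)) := by
  let T : ℕ → WeakDual ℝ H := fun n => StrongDual.toWeakDual (InnerProductSpace.toDual ℝ H (x n))
  have hc := WeakDual.isCompact_closedBall (𝕜 := ℝ) (E := H) 0 B
  obtain ⟨t, -, ht⟩ := hc.ultrafilter_le_nhds (U.map T) (by
    simp only [le_principal_iff, Ultrafilter.mem_coe, Ultrafilter.mem_map]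
    refine Filter.univ_mem' fun n => ?_
    simp only [Set.mem_preimage, Metric.mem_closedBall, dist_zero_right, T]
    simpa using hB n)
  refine ⟨(InnerProductSpace.toDual ℝ H).symm (WeakDual.toStrongDual t), fun z => ?_⟩
  have h1 : Tendsto T U (𝓝 t) := ht
  have h2 := ((WeakDual.eval_continuous z).tendsto t).comp h1
  have e : inner ℝ z ((InnerProductSpace.toDual ℝ H).symm (WeakDual.toStrongDual t)) = t z := by
    rw [real_inner_comm, InnerProductSpace.toDual_symm_apply]; rfl
  rw [e]
  refine h2.congr fun n => ?_
  simp only [Function.comp, T]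
  rw [real_inner_comm]; rfl

theorem kl_real_limit (U : Ultrafilter ℕ) (x : ℕ → ℝ) (B : ℝ) (h0 : ∀ n, 0 ≤ x n)
    (hB : ∀ n, x n ≤ B) : ∃ q : ℝ, Tendsto x U (𝓝 q) := by
  obtain ⟨t, -, ht⟩ := (isCompact_Icc (a := (0:ℝ)) (b := B)).ultrafilter_le_nhds (U.map x) (by
    simp only [le_principal_iff, Ultrafilter.mem_coe, Ultrafilter.mem_map]
    exact Filter.univ_mem' fun n => ⟨h0 n, hB n⟩)
  exact ⟨t, ht⟩

theorem kl_select {H : Type*} [NormedAddCommGroup H] [InnerProductSpace ℝ H] [CompleteSpace H]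
    (x : ℕ → ℕ → H) (B : ℕ → ℝ) (hB : ∀ j n, ‖x j n‖ ≤ B j) (C : ℝ)
    (hC : ∀ n J, ∑ j ∈ Finset.range J, ‖x j n‖ ^ 2 / ((j : ℝ) + 1) ^ 2 ≤ C) :
    ∃ (U : Ultrafilter ℕ) (h : ℕ → H) (q : ℕ → ℝ) (σ : ℕ → ℕ), 
      (∀ j (z : H), Tendsto (fun n => inner ℝ z (x j n)) U (𝓝 (inner ℝ z (h j)))) ∧
      Summable q ∧ StrictMono σ ∧
      (∀ n j, j ≤ n → ‖x j (σ n)‖ ^ 2 / ((j : ℝ) + 1) ^ 2 ≤ q j + (1 / 2) ^ n) ∧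
      (∀ n j, j ≤ n → ‖x j (σ n) - h j‖ ^ 2 ≤ ‖x j (σ n)‖ ^ 2 + 1) ∧
      (∀ m n i j, m < n → i ≤ m → j ≤ n →
        |inner ℝ (x i (σ m) - h i) (x j (σ n) - h j)| ≤ 1 / ((n : ℝ) + 1)) := by
  let U : Ultrafilter ℕ := hyperfilter ℕ
  have hU : (U : Filter ℕ) ≤ atTop := by
    rw [← Nat.cofinite_eq_atTop]; exact hyperfilter_le_cofinite
  choose h hh using fun j => kl_weak_limit U (x j) (B j) (hB j)
  choose q hq using fun j => kl_real_limit U (fun n => ‖x j n‖ ^ 2 / ((j : ℝ) + 1) ^ 2) C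
    (fun n => by positivity) (fun n => by
      refine le_trans ?_ (hC n (j + 1))
      exact Finset.single_le_sum (f := fun j : ℕ => ‖x j n‖ ^ 2 / ((j : ℝ) + 1) ^ 2)
        (fun i _ => by positivity) (Finset.self_mem_range_succ j))
  have hq0 : ∀ j, 0 ≤ q j := fun j => ge_of_tendsto' (hq j) fun n => by positivity
  have hqs : Summable q := by
    refine summable_of_sum_range_le (c := C) hq0 fun J => ?_
    exact le_of_tendsto' (tendsto_finsetSum (Finset.range J) fun j _ => hq j) fun n => hC n J
  have e1 : ∀ k j : ℕ, ∀ᶠ v in (U : Filter ℕ),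
      ‖x j v‖ ^ 2 / ((j : ℝ) + 1) ^ 2 ≤ q j + (1 / 2) ^ k := fun k j =>
    ((hq j).eventually_lt_const (by simp : q j < q j + (1/2) ^ k)).mono fun _ h => h.le
  have e2 : ∀ j : ℕ, ∀ᶠ v in (U : Filter ℕ), ‖x j v - h j‖ ^ 2 ≤ ‖x j v‖ ^ 2 + 1 := by
    intro j
    have := hh j (h j)
    rw [real_inner_self_eq_norm_sq] at this
    filter_upwards [this.eventually_const_lt (by linarith : ‖h j‖ ^ 2 - 1 / 2 < ‖h j‖ ^ 2)] with v hv
    rw [norm_sub_sq_real, real_inner_comm]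
    nlinarith [sq_nonneg ‖h j‖]
  have e3 : ∀ (k j : ℕ) (z : H), ∀ᶠ v in (U : Filter ℕ),
      |inner ℝ z (x j v - h j)| ≤ 1 / ((k : ℝ) + 1) := by
    intro k j z
    have := ((hh j z).sub_const (inner ℝ z (h j))).abs
    rw [sub_self, abs_zero] at this
    filter_upwards [this.eventually_lt_const (by positivity : (0:ℝ) < 1 / ((k : ℝ) + 1))] with v hv
    rw [inner_sub_right]; exact hv.le
  let P : ℕ × ℕ → Prop := fun p => ∀ j ≤ p.1,
    ‖x j p.2‖ ^ 2 / ((j : ℝ) + 1) ^ 2 ≤ q j + (1 / 2) ^ p.1 ∧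
    ‖x j p.2 - h j‖ ^ 2 ≤ ‖x j p.2‖ ^ 2 + 1
  let r : ℕ × ℕ → ℕ × ℕ → Prop := fun p p' => p.1 < p'.1 ∧ p.2 < p'.2 ∧ 
    ∀ i ≤ p.1, ∀ j ≤ p'.1, |inner ℝ (x i p.2 - h i) (x j p'.2 - h j)| ≤ 1 / ((p'.1 : ℝ) + 1)
  obtain ⟨F, hF1, hF2⟩ := exists_seq_of_forall_finset_exists P r (by
    intro s _
    let k := s.sup Prod.fst + 1
    have a1 : ∀ᶠ v in (U : Filter ℕ), P (k, v) := by
      simp only [P]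
      have := (Filter.eventually_all_finite (Set.finite_Iic k)
        (l := (U : Filter ℕ))).2 fun j _ => (e1 k j).and (e2 j)
      exact this
    have a2 : ∀ᶠ v in (U : Filter ℕ), ∀ p ∈ s, r p (k, v) := by
      refine (Filter.eventually_all_finset s).2 fun p hp => ?_
      have b1 : p.1 < k := Nat.lt_succ_of_le (Finset.le_sup (f := Prod.fst) hp)
      have b2 : ∀ᶠ v in (U : Filter ℕ), p.2 < v := hU (eventually_gt_atTop p.2)
      have b3 : ∀ᶠ v in (U : Filter ℕ), ∀ i ∈ Set.Iic p.1, ∀ j ∈ Set.Iic k,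
          |inner ℝ (x i p.2 - h i) (x j v - h j)| ≤ 1 / ((k : ℝ) + 1) :=
        (Filter.eventually_all_finite (Set.finite_Iic _)).2 fun i _ =>
          (Filter.eventually_all_finite (Set.finite_Iic _)).2 fun j _ => e3 k j _
      filter_upwards [b2, b3] with v h2 h3
      exact ⟨b1, h2, h3⟩
    obtain ⟨v, h1, h2⟩ := (a1.and a2).exists
    exact ⟨(k, v), h1, h2⟩)
  have hk : StrictMono fun n => (F n).1 := fun m n hmn => (hF2 m n hmn).1
  have hkn : ∀ n, n ≤ (F n).1 := fun n => hk.le_apply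
  refine ⟨U, h, q, fun n => (F n).2, hh, hqs, fun m n hmn => (hF2 m n hmn).2.1, ?_, ?_, ?_⟩
  · intro n j hj
    refine ((hF1 n j (hj.trans (hkn n))).1).trans ?_
    have := pow_le_pow_of_le_one (a := (1 / 2 : ℝ)) (by norm_num) (by norm_num) (hkn n)
    linarith
  · intro n j hj
    exact (hF1 n j (hj.trans (hkn n))).2
  · intro m n i j hmn hi hj
    refine ((hF2 m n hmn).2.2 i (hi.trans (hkn m)) j (hj.trans (hkn n))).trans ?_
    gcongr
    exact hkn n

theorem kl_sum_sq {H : Type*} [NormedAddCommGroup H] [InnerProductSpace ℝ H] (y : ℕ → H)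
    (hy : ∀ i k, i < k → |inner ℝ (y i) (y k)| ≤ 1 / ((k : ℝ) + 1)) (N : ℕ) :
    ‖∑ k ∈ Finset.range N, y k‖ ^ 2 ≤ ∑ k ∈ Finset.range N, (‖y k‖ ^ 2 + 2) := by
  induction N with
  | zero => simp
  | succ N ih =>
    rw [Finset.sum_range_succ, Finset.sum_range_succ, norm_add_sq_real, sum_inner]
    have : ∑ i ∈ Finset.range N, inner ℝ (y i) (y N) ≤ 1 := by
      calc ∑ i ∈ Finset.range N, inner ℝ (y i) (y N) 
          ≤ ∑ i ∈ Finset.range N, 1 / ((N : ℝ) + 1) := Finset.sum_le_sum fun i hi =>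
            (le_abs_self _).trans (hy i N (Finset.mem_range.1 hi))
        _ ≤ 1 := by
          simp only [Finset.sum_const, Finset.card_range, nsmul_eq_mul]
          rw [mul_one_div, div_le_one (by positivity)]; linarith
    linarith

theorem kl_summable_floor (a : ℕ → ℝ) (ha : ∀ k, 0 ≤ a k)
    (hs : Summable fun k : ℕ => a k / ((k : ℝ) + 1) ^ 2) (c : ℝ) (hc : 1 < c) :
    Summable fun i : ℕ => (∑ k ∈ Finset.range ⌊c ^ i⌋₊, a k) / (⌊c ^ i⌋₊ : ℝ) ^ 2 := by
  have hc1 : 0 < c - 1 := by linarith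
  set D := c ^ 5 * (c - 1)⁻¹ ^ 3 with hD
  have hD0 : 0 ≤ D := by positivity
  refine summable_of_sum_range_le (c := 4 * D * ∑' k : ℕ, a k / ((k : ℝ) + 1) ^ 2)
    (fun i => div_nonneg (Finset.sum_nonneg fun k _ => ha k) (by positivity)) fun I => ?_
  obtain ⟨M, hM⟩ : ∃ M, ∀ i ∈ Finset.range I, ⌊c ^ i⌋₊ ≤ M :=
    ⟨(Finset.range I).sup fun i => ⌊c ^ i⌋₊, fun i hi =>
      Finset.le_sup (f := fun i => ⌊c ^ i⌋₊) hi⟩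
  calc ∑ i ∈ Finset.range I, (∑ k ∈ Finset.range ⌊c ^ i⌋₊, a k) / (⌊c ^ i⌋₊ : ℝ) ^ 2
      = ∑ i ∈ Finset.range I, ∑ k ∈ Finset.range M, 
          if k < ⌊c ^ i⌋₊ then a k * (1 / (⌊c ^ i⌋₊ : ℝ) ^ 2) else 0 := by
        refine Finset.sum_congr rfl fun i hi => ?_
        rw [← Finset.sum_filter, Finset.sum_div]
        refine Finset.sum_congr ?_ fun k _ => by ring
        ext k
        simp only [Finset.mem_range, Finset.mem_filter]
        have := hM i hi
        omega
    _ = ∑ k ∈ Finset.range M, a k * ∑ i ∈ Finset.range I with k < ⌊c ^ i⌋₊, 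
          (1 / (⌊c ^ i⌋₊ : ℝ) ^ 2) := by
        rw [Finset.sum_comm]
        refine Finset.sum_congr rfl fun k _ => ?_
        rw [← Finset.sum_filter, Finset.mul_sum]
    _ ≤ ∑ k ∈ Finset.range M, a k * (D / (((k : ℝ) + 1) / 2) ^ 2) := by
        refine Finset.sum_le_sum fun k _ => mul_le_mul_of_nonneg_left ?_ (ha k)
        refine le_trans ?_ (sum_div_nat_floor_pow_sq_le_div_sq I 
          (by positivity : (0:ℝ) < ((k : ℝ) + 1) / 2) hc)
        refine Finset.sum_le_sum_of_subset_of_nonneg ?_ fun i _ _ => by positivity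
        intro i
        simp only [Finset.mem_filter]
        refine fun h => ⟨h.1, ?_⟩
        have : ((k : ℝ) + 1) ≤ ⌊c ^ i⌋₊ := by exact_mod_cast h.2
        have : (0:ℝ) ≤ k := by positivity
        linarith
    _ = 4 * D * ∑ k ∈ Finset.range M, a k / ((k : ℝ) + 1) ^ 2 := by
        rw [Finset.mul_sum]
        refine Finset.sum_congr rfl fun k _ => ?_
        have : ((k : ℝ) + 1) ≠ 0 := by positivity
        field_simp
        ring
    _ ≤ _ := by
        refine mul_le_mul_of_nonneg_left ?_ (by positivity)
        exact hs.sum_le_tsum _ fun k _ => div_nonneg (ha k) (by positivity)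

theorem kl_pointwise (t : ℝ) (ht : 0 ≤ t) (J : ℕ) :
    ∑ j ∈ Finset.range J, (min t ((j : ℝ) + 1)) ^ 2 / ((j : ℝ) + 1) ^ 2 ≤ 3 * t := by
  have key : ∑ j ∈ Finset.range J, (min t ((j : ℝ) + 1)) ^ 2 / ((j : ℝ) + 1) ^ 2
      ≤ if (J : ℝ) ≤ t then (J : ℝ) else 3 * t - t ^ 2 / J := by
    induction J with
    | zero => simp [ht]
    | succ J ih =>
      rw [Finset.sum_range_succ]
      have hJ : (0:ℝ) ≤ J := by positivity
      have hJ1 : (0:ℝ) < (J:ℝ) + 1 := by positivity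
      push_cast
      by_cases h1 : (J : ℝ) + 1 ≤ t
      · rw [if_pos (by linarith)] at ih
        rw [if_pos h1, min_eq_right h1, div_self (by positivity)]
        linarith
      · push Not at h1
        rw [if_neg (not_le.2 h1), min_eq_left h1.le]
        have b0 : t / (J + 1) ≤ 1 := by rw [div_le_one hJ1]; exact h1.le
        have b00 : 0 ≤ t / (J + 1) := by positivity
        by_cases h2 : (J : ℝ) ≤ t
        · rw [if_pos h2] at ih
          have b1 : t ^ 2 / ((J : ℝ) + 1) ≤ t := by
            rw [div_le_iff₀ hJ1]; nlinarith
          have b2 : t ^ 2 / ((J : ℝ) + 1) ^ 2 ≤ t := by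
            rw [div_le_iff₀ (by positivity)]; nlinarith [mul_nonneg ht hJ, mul_nonneg (mul_nonneg ht hJ) hJ]
          linarith
        · rw [if_neg h2] at ih
          push Not at h2
          have hJp : (0:ℝ) < J := by linarith
          have : t ^ 2 / ((J : ℝ) + 1) ^ 2 ≤ t ^ 2 / J - t ^ 2 / (J + 1) := by
            rw [div_sub_div _ _ hJp.ne' hJ1.ne', div_le_div_iff₀ (by positivity) (by positivity)]
            nlinarith [mul_nonneg (sq_nonneg t) hJ, mul_nonneg (mul_nonneg (sq_nonneg t) hJ) hJ]
          linarith
  refine key.trans ?_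
  split_ifs with h
  · linarith
  · have : 0 ≤ t ^ 2 / J := by positivity
    linarith

theorem kl_ae_tendsto {Ω : Type*} [MeasurableSpace Ω] {η : Measure Ω} (z : ℕ → Lp ℝ 2 η)
    (hz : Summable fun i => ‖z i‖ ^ 2) :
    ∀ᵐ ω ∂η, Tendsto (fun i => z i ω) atTop (𝓝 0) := by
  have e : ∀ i, ∫⁻ ω, ‖z i ω‖ₑ ^ 2 ∂η = ENNReal.ofReal (‖z i‖ ^ 2) := by
    intro i
    have h1 := eLpNorm_nnreal_pow_eq_lintegral (f := z i) (μ := η) (p := 2) (by norm_num)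
    have h2 : eLpNorm (z i) 2 η = ENNReal.ofReal ‖z i‖ := by
      rw [Lp.norm_def, ENNReal.ofReal_toReal (Lp.eLpNorm_ne_top _)]
    rw [ENNReal.ofReal_pow (norm_nonneg _), ← h2]
    simpa using h1.symm
  have hm : ∀ i, AEMeasurable (fun ω => ‖z i ω‖ₑ ^ 2) η := fun i =>
    ((Lp.aestronglyMeasurable (z i)).enorm).pow_const 2
  have : ∫⁻ ω, ∑' i, ‖z i ω‖ₑ ^ 2 ∂η ≠ ⊤ := by
    rw [lintegral_tsum hm]
    simp_rw [e]
    exact hz.tsum_ofReal_ne_top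
  filter_upwards [ae_lt_top' (AEMeasurable.tsum hm) this] with ω hω
  have h1 := ENNReal.tendsto_atTop_zero_of_tsum_ne_top hω.ne
  have h2 : Tendsto (fun i => (z i ω) ^ 2) atTop (𝓝 0) := by
    have := (ENNReal.tendsto_toReal ENNReal.zero_ne_top).comp h1
    simpa [Function.comp_def] using this
  have h3 := h2.sqrt
  simp only [Real.sqrt_sq_eq_abs, Real.sqrt_zero] at h3
  exact (tendsto_zero_iff_abs_tendsto_zero _).2 h3

theorem kl_l1_bound {Ω : Type*} [MeasurableSpace Ω] (η : Measure Ω) [IsFiniteMeasure η]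
    (g : ℕ → Ω → ℝ) (hm : ∀ n, Measurable (g n)) (hg : ∀ n, Integrable (g n) η)
    (hwn : ∀ φ : Ω → ℝ, Measurable φ → (∃ C : ℝ, ∀ ω, |φ ω| ≤ C) →
      Tendsto (fun n => ∫ ω, g n ω * φ ω ∂η) atTop (nhds 0)) :
    ∃ C : ℝ, ∀ n, ∫ ω, |g n ω| ∂η ≤ C := by
  let G : ℕ → Lp ℝ 1 η := fun n => (memLp_one_iff_integrable.2 (hg n)).toLp (g n)
  have hG : ∀ n, G n =ᵐ[η] g n := fun n => MemLp.coeFn_toLp _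
  let L : ℕ → (Lp ℝ ∞ η →L[ℝ] ℝ) := fun n => (ContinuousLinearMap.mul ℝ ℝ).lpPairing η 1 ∞ (G n)
  have hL : ∀ n φ, L n φ = ∫ ω, g n ω * φ ω ∂η := by
    intro n φ
    simp only [L]
    rw [ContinuousLinearMap.lpPairing_eq_integral]
    refine integral_congr_ae ?_
    filter_upwards [hG n] with ω h
    simp [h]
  obtain ⟨C, hC⟩ := banach_steinhaus (g := L) (by
    intro φ
    obtain ⟨K, hK⟩ : ∃ K : ℝ, ∀ᵐ ω ∂η, |φ ω| ≤ K := by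
      refine ⟨‖φ‖, ?_⟩
      have h1 := ae_le_eLpNormEssSup (f := φ) (μ := η)
      filter_upwards [h1] with ω h
      rw [← eLpNorm_exponent_top] at h
      have := ENNReal.toReal_mono (Lp.eLpNorm_ne_top φ) h
      rw [Lp.norm_def]
      simpa using this
    let ψ : Ω → ℝ := fun ω => max (-K) (min K ((Lp.aestronglyMeasurable φ).mk φ ω))
    have hψm : Measurable ψ := measurable_const.max 
      (measurable_const.min (Lp.aestronglyMeasurable φ).stronglyMeasurable_mk.measurable)
    have hψ : ψ =ᵐ[η] φ := by
      filter_upwards [(Lp.aestronglyMeasurable φ).ae_eq_mk, hK] with ω h1 h2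
      simp only [ψ, ← h1]
      rw [abs_le] at h2
      rw [min_eq_right h2.2, max_eq_right h2.1]
    have hb : ∃ C : ℝ, ∀ ω, |ψ ω| ≤ C := by
      refine ⟨|K|, fun ω => ?_⟩
      simp only [ψ, abs_le]
      refine ⟨le_trans (neg_le_neg (le_abs_self K)) (le_max_left _ _), 
        max_le (neg_le_abs K) ((min_le_left _ _).trans (le_abs_self K))⟩
    obtain ⟨R, hR⟩ := (hwn ψ hψm hb).norm.bddAbove_range
    refine ⟨R, fun n => ?_⟩
    rw [hL]
    have : ∫ ω, g n ω * φ ω ∂η = ∫ ω, g n ω * ψ ω ∂η := by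
      refine integral_congr_ae ?_
      filter_upwards [hψ] with ω h
      rw [h]
    rw [this]
    exact hR ⟨n, rfl⟩)
  refine ⟨C, fun n => ?_⟩
  let s : Ω → ℝ := fun ω => if 0 ≤ g n ω then 1 else -1
  have hs : Measurable s := Measurable.ite (measurableSet_le measurable_const (hm n))
    measurable_const measurable_const
  have hs1 : ∀ ω, ‖s ω‖ ≤ 1 := fun ω => by simp only [s]; split_ifs <;> simp
  have hsL : MemLp s ∞ η := memLp_top_of_bound hs.aestronglyMeasurable 1 (ae_of_all _ hs1)
  have hn : ‖hsL.toLp s‖ ≤ 1 := by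
    rw [Lp.norm_toLp]
    refine ENNReal.toReal_le_of_le_ofReal zero_le_one ?_
    rw [eLpNorm_exponent_top]
    exact eLpNormEssSup_le_of_ae_bound (ae_of_all _ hs1)
  have h1 := (L n).le_opNorm (hsL.toLp s)
  have h2 : L n (hsL.toLp s) = ∫ ω, |g n ω| ∂η := by
    rw [hL]
    refine integral_congr_ae ?_
    filter_upwards [hsL.coeFn_toLp] with ω h
    rw [h]
    simp only [s]
    split_ifs with h0
    · rw [abs_of_nonneg h0, mul_one]
    · rw [abs_of_neg (not_le.1 h0)]; ring
  rw [h2] at h1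
  calc _ ≤ _ := le_abs_self _
    _ ≤ _ := h1
    _ ≤ ‖L n‖ * 1 := by gcongr
    _ ≤ C := by simpa using hC n

theorem kl_limit_zero {Ω : Type*} [MeasurableSpace Ω] (η : Measure Ω) [IsFiniteMeasure η]
    (M : ℕ → Ω → ℝ) (hm : ∀ n, Measurable (M n)) 
    (hwn : ∀ φ : Ω → ℝ, Measurable φ → (∃ C : ℝ, ∀ ω, |φ ω| ≤ C) →
      Tendsto (fun n => ∫ ω, M n ω * φ ω ∂η) atTop (nhds 0))
    (hc : ∀ᵐ ω ∂η, ∃ l, Tendsto (fun n => M n ω) atTop (𝓝 l)) :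
    ∀ᵐ ω ∂η, Tendsto (fun n => M n ω) atTop (𝓝 0) := by
  obtain ⟨h, hhm, hh⟩ := measurable_limit_of_tendsto_metrizable_ae
    (fun n => (hm n).aemeasurable) hc
  let A : ℕ → Set Ω := fun K => {ω | ∀ n, |M n ω| ≤ K}
  have hA : ∀ K, MeasurableSet (A K) := fun K => by
    have : A K = ⋂ n, {ω | |M n ω| ≤ K} := by ext; simp [A]
    rw [this]
    exact MeasurableSet.iInter fun n => measurableSet_le (hm n).abs measurable_const
  let s : Ω → ℝ := fun ω => if 0 ≤ h ω then 1 else -1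
  have hs : Measurable s := Measurable.ite (measurableSet_le measurable_const hhm)
    measurable_const measurable_const
  have hs1 : ∀ ω, |s ω| ≤ 1 := fun ω => by simp only [s]; split_ifs <;> simp
  have key : ∀ K, ∀ᵐ ω ∂η, ω ∈ A K → h ω = 0 := by
    intro K
    let φ : Ω → ℝ := (A K).indicator s
    have hφm : Measurable φ := hs.indicator (hA K)
    have hφ1 : ∀ ω, |φ ω| ≤ 1 := fun ω => by
      simp only [φ, Set.indicator]; split_ifs
      · exact hs1 ω
      · simp
    have bd : ∀ n ω, |M n ω * φ ω| ≤ K := by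
      intro n ω
      by_cases hω : ω ∈ A K
      · rw [abs_mul]
        calc _ ≤ (K:ℝ) * 1 := mul_le_mul (hω n) (hφ1 ω) (abs_nonneg _) (by positivity)
          _ = K := mul_one _
      · simp [φ, hω]
    have lim : ∀ᵐ ω ∂η, Tendsto (fun n => M n ω * φ ω) atTop (𝓝 (h ω * φ ω)) := by
      filter_upwards [hh] with ω h1
      exact h1.mul_const _
    have h1 : Tendsto (fun n => ∫ ω, M n ω * φ ω ∂η) atTop (𝓝 (∫ ω, h ω * φ ω ∂η)) := 
      tendsto_integral_of_dominated_convergence (fun _ => (K:ℝ))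
        (fun n => ((hm n).mul hφm).aestronglyMeasurable) (integrable_const _)
        (fun n => ae_of_all _ fun ω => bd n ω) lim
    have h2 := tendsto_nhds_unique h1 (hwn φ hφm ⟨1, hφ1⟩)
    have pos : ∀ ω, h ω * φ ω = (A K).indicator (fun ω => |h ω|) ω := by
      intro ω
      by_cases hω : ω ∈ A K
      · simp only [φ, Set.indicator_of_mem hω, s]
        split_ifs with h0
        · rw [abs_of_nonneg h0, mul_one]
        · rw [abs_of_neg (not_le.1 h0)]; ring
      · simp [φ, hω]
    have hint : Integrable (fun ω => h ω * φ ω) η := by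
      refine Integrable.of_bound (hhm.mul hφm).aestronglyMeasurable (K:ℝ) ?_
      filter_upwards [lim] with ω h1
      exact le_of_tendsto' h1.norm fun n => bd n ω
    have h3 := (integral_eq_zero_iff_of_nonneg (fun ω => by
      rw [pos]; exact Set.indicator_nonneg (fun _ _ => abs_nonneg _) _) hint).1 h2
    filter_upwards [h3] with ω h4 hω
    rw [pos, Set.indicator_of_mem hω] at h4
    simpa using h4
  filter_upwards [hh, ae_all_iff.2 key] with ω h1 h2
  obtain ⟨R, hR⟩ := h1.abs.bddAbove_range
  obtain ⟨K, hK⟩ := exists_nat_ge R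
  have := h2 K (fun n => (hR ⟨n, rfl⟩).trans hK)
  rwa [this] at h1

theorem kl_nonneg {Ω : Type*} [MeasurableSpace Ω] (η : Measure Ω) [IsFiniteMeasure η]
    (f : ℕ → Ω → ℝ) (hm : ∀ n, Measurable (f n)) (hf : ∀ n, Integrable (f n) η)
    (h0 : ∀ n ω, 0 ≤ f n ω) (C : ℝ) (hC : ∀ n, ∫ ω, f n ω ∂η ≤ C) :
    ∃ σ : ℕ → ℕ, StrictMono σ ∧ ∀ τ : ℕ → ℕ, StrictMono τ → ∀ᵐ ω ∂η,
      ∃ l, Tendsto (fun n : ℕ => (∑ k ∈ Finset.range n, f (σ (τ k)) ω) / n) atTop (𝓝 l) := by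
  let X : ℕ → ℕ → Ω → ℝ := fun j n ω => min (f n ω) ((j : ℝ) + 1)
  have hXm : ∀ j n, Measurable (X j n) := fun j n => (hm n).min measurable_const
  have hX0 : ∀ j n ω, 0 ≤ X j n ω := fun j n ω => le_min (h0 n ω) (by positivity)
  have hXb : ∀ j n ω, ‖X j n ω‖ ≤ (j : ℝ) + 1 := fun j n ω => by
    rw [Real.norm_of_nonneg (hX0 j n ω)]; exact min_le_right _ _
  have hXL : ∀ j n, MemLp (X j n) 2 η := fun j n =>
    MemLp.of_bound (hXm j n).aestronglyMeasurable _ (ae_of_all _ (hXb j n))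
  have hXi : ∀ j n, Integrable (X j n) η := fun j n =>
    Integrable.of_bound (hXm j n).aestronglyMeasurable _ (ae_of_all _ (hXb j n))
  let x : ℕ → ℕ → Lp ℝ 2 η := fun j n => (hXL j n).toLp (X j n)
  have hx : ∀ j n, x j n =ᵐ[η] X j n := fun j n => (hXL j n).coeFn_toLp
  have hxn : ∀ j n, ‖x j n‖ ^ 2 = ∫ ω, X j n ω ^ 2 ∂η := by
    intro j n
    rw [← real_inner_self_eq_norm_sq, L2.inner_def]
    refine integral_congr_ae ?_
    filter_upwards [hx j n] with ω h
    simp [h, sq]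
  have hsum : ∀ n J, ∑ j ∈ Finset.range J, ‖x j n‖ ^ 2 / ((j : ℝ) + 1) ^ 2 ≤ 3 * C := by
    intro n J
    calc _ = ∑ j ∈ Finset.range J, ∫ ω, X j n ω ^ 2 / ((j : ℝ) + 1) ^ 2 ∂η := by
          refine Finset.sum_congr rfl fun j _ => ?_
          rw [hxn, integral_div]
      _ = ∫ ω, ∑ j ∈ Finset.range J, X j n ω ^ 2 / ((j : ℝ) + 1) ^ 2 ∂η := by
          rw [integral_finsetSum]
          intro j _
          exact ((hXL j n).integrable_sq).div_const _
      _ ≤ ∫ ω, 3 * f n ω ∂η := by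
          refine integral_mono ?_ ((hf n).const_mul 3) fun ω => kl_pointwise _ (h0 n ω) J
          refine integrable_finsetSum _ fun j _ => ?_
          exact ((hXL j n).integrable_sq).div_const _
      _ ≤ 3 * C := by rw [integral_const_mul]; linarith [hC n]
  obtain ⟨U, h, q, σ, hh, hq, hσ, s1, s2, s3⟩ := kl_select x
    (fun j => (measureUnivNNReal η : ℝ) ^ ((2 : ℝ≥0∞).toReal)⁻¹ * ((j : ℝ) + 1))
    (fun j n => Lp.norm_le_of_ae_bound (by positivity) (by
      filter_upwards [hx j n] with ω h1
      rw [h1]; exact hXb j n ω)) (3 * C) hsum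
  -- the weak limits increase to a finite limit
  have hhi : ∀ j, Integrable (h j) η := fun j => (Lp.memLp (h j)).integrable (by norm_num)
  have hset : ∀ j (A : Set Ω), MeasurableSet A →
      Tendsto (fun n => ∫ ω in A, X j n ω ∂η) U (𝓝 (∫ ω in A, h j ω ∂η)) := by
    intro j A hA
    have := hh j (indicatorConstLp 2 hA (measure_ne_top η A) (1:ℝ))
    simp only [L2.inner_indicatorConstLp_one] at this
    refine this.congr fun n => ?_
    refine integral_congr_ae (ae_restrict_of_ae (hx j n))
  have hmono : ∀ᵐ ω ∂η, ∀ j, h j ω ≤ h (j + 1) ω := by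
    refine ae_all_iff.2 fun j => ?_
    refine ae_le_of_forall_setIntegral_le (hhi j) (hhi _) fun A hA _ => ?_
    refine le_of_tendsto_of_tendsto' (hset j A hA) (hset _ A hA) fun n => ?_
    refine integral_mono (hXi _ _).integrableOn (hXi _ _).integrableOn fun ω => ?_
    simp only [X]
    refine min_le_min le_rfl ?_
    push_cast; linarith
  have hnn : ∀ j, 0 ≤ᵐ[η] h j := fun j => by
    refine ae_le_of_forall_setIntegral_le (integrable_zero _ _ _) (hhi j) fun A hA _ => ?_
    simp only [Pi.zero_apply, integral_zero]
    exact ge_of_tendsto' (hset j A hA) fun n => integral_nonneg fun ω => hX0 j n ω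
  have hhC : ∀ j, ∫ ω, h j ω ∂η ≤ C := by
    intro j
    have := hset j Set.univ MeasurableSet.univ
    simp only [Measure.restrict_univ] at this
    refine le_of_tendsto' this fun n => (integral_mono (hXi j n) (hf n) fun ω => ?_).trans (hC n)
    exact min_le_left _ _
  have hlim : ∀ᵐ ω ∂η, ∃ l, Tendsto (fun j => h j ω) atTop (𝓝 l) := by
    have hae : ∀ j, AEMeasurable (fun ω => ENNReal.ofReal (h j ω)) η := fun j =>
      (Lp.aestronglyMeasurable (h j)).aemeasurable.ennreal_ofReal
    have hfin : ∫⁻ ω, ⨆ j, ENNReal.ofReal (h j ω) ∂η ≠ ⊤ := by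
      rw [lintegral_iSup' hae (by
        filter_upwards [hmono] with ω h1
        exact fun i j hij => ENNReal.ofReal_le_ofReal (monotone_nat_of_le_succ h1 hij))]
      refine ne_top_of_le_ne_top (ENNReal.ofReal_ne_top (r := C)) (iSup_le fun j => ?_)
      rw [← ofReal_integral_eq_lintegral_ofReal (hhi j) (hnn j)]
      exact ENNReal.ofReal_le_ofReal (hhC j)
    filter_upwards [hmono, ae_lt_top' (AEMeasurable.iSup hae) hfin] with ω h1 h2
    refine ⟨_, tendsto_atTop_ciSup (monotone_nat_of_le_succ h1) ⟨(⨆ j, ENNReal.ofReal (h j ω)).toReal, ?_⟩⟩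
    rintro _ ⟨j, rfl⟩
    exact (ENNReal.ofReal_le_iff_le_toReal h2.ne).1 (le_iSup (fun j => ENNReal.ofReal (h j ω)) j)
  refine ⟨σ, hσ, fun τ hτ => ?_⟩
  have hτk : ∀ k, k ≤ τ k := fun k => hτ.le_apply
  let w : ℕ → Lp ℝ 2 η := fun k => x k (σ (τ k))
  let y : ℕ → Lp ℝ 2 η := fun k => w k - h k
  have hw : Summable fun k : ℕ => ‖w k‖ ^ 2 / ((k : ℝ) + 1) ^ 2 := by
    refine Summable.of_nonneg_of_le (fun k => by positivity) (fun k => ?_)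
      (hq.add (summable_geometric_of_lt_one (r := (1/2 : ℝ)) (by norm_num) (by norm_num)))
    refine (s1 (τ k) k (hτk k)).trans ?_
    have := pow_le_pow_of_le_one (a := (1 / 2 : ℝ)) (by norm_num) (by norm_num) (hτk k)
    linarith
  have hinv : Summable fun k : ℕ => 1 / ((k : ℝ) + 1) ^ 2 := by
    have := (summable_nat_add_iff 1).2 (Real.summable_one_div_nat_pow.2 (by norm_num : 1 < 2))
    simpa using this
  have hya : Summable fun k : ℕ => (‖w k‖ ^ 2 + 3) / ((k : ℝ) + 1) ^ 2 := by
    refine (hw.add (hinv.mul_left 3)).congr fun k => ?_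
    ring
  have hy : ∀ N, ‖∑ k ∈ Finset.range N, y k‖ ^ 2 ≤ ∑ k ∈ Finset.range N, (‖w k‖ ^ 2 + 3) := by
    intro N
    refine (kl_sum_sq y (fun i k hik => ?_) N).trans (Finset.sum_le_sum fun k _ => ?_)
    · refine (s3 (τ i) (τ k) i k (hτ hik) (hτk i) (hτk k)).trans ?_
      gcongr
      exact hτk k
    · have := s2 (τ k) k (hτk k)
      simp only [y, w]
      linarith
  -- truncation is eventually inactive
  have htr : ∀ᵐ ω ∂η, ∀ᶠ k in atTop, X k (σ (τ k)) ω = f (σ (τ k)) ω := by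
    have := kl_ae_tendsto (fun k : ℕ => ((k : ℝ) + 1)⁻¹ • w k) (by
      refine hw.congr fun k => ?_
      rw [norm_smul, mul_pow, Real.norm_of_nonneg (by positivity)]
      field_simp)
    filter_upwards [this, ae_all_iff.2 fun k => hx k (σ (τ k)), 
      ae_all_iff.2 fun k : ℕ => Lp.coeFn_smul ((k : ℝ) + 1)⁻¹ (w k)] with ω h1 h2 h3
    filter_upwards [h1.eventually_lt_const one_pos] with k hk
    rw [h3, Pi.smul_apply, h2, smul_eq_mul, inv_mul_lt_iff₀ (by positivity), mul_one] at hk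
    simp only [X] at hk ⊢
    refine min_eq_left ?_
    by_contra hcon
    rw [min_eq_right (not_le.1 hcon).le] at hk
    exact lt_irrefl _ hk
  have hfl : ∀ c : ℝ, 1 < c → ∀ᵐ ω ∂η, Tendsto (fun i : ℕ => 
      (∑ k ∈ Finset.range ⌊c ^ i⌋₊, y k ω) / (⌊c ^ i⌋₊ : ℝ)) atTop (𝓝 0) := by
    intro c hc
    have := kl_ae_tendsto (fun i : ℕ => ((⌊c ^ i⌋₊ : ℝ))⁻¹ • ∑ k ∈ Finset.range ⌊c ^ i⌋₊, y k) (by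
      refine Summable.of_nonneg_of_le (fun k => by positivity) (fun i => ?_)
        (kl_summable_floor _ (fun k => by positivity) hya c hc)
      rw [norm_smul, mul_pow, Real.norm_of_nonneg (by positivity), div_eq_inv_mul, inv_pow]
      gcongr
      exact hy _)
    filter_upwards [this, ae_all_iff.2 fun i : ℕ => Lp.coeFn_smul ((⌊c ^ i⌋₊ : ℝ))⁻¹ 
      (∑ k ∈ Finset.range ⌊c ^ i⌋₊, y k), ae_all_iff.2 fun i : ℕ => 
      Lp.coeFn_finsetSum (Finset.range ⌊c ^ i⌋₊) y] with ω h1 h2 h3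
    refine h1.congr fun i => ?_
    rw [h2, Pi.smul_apply, h3, Finset.sum_apply, smul_eq_mul, div_eq_inv_mul]
  let c : ℕ → ℝ := fun k => 1 + 1 / ((k : ℝ) + 1)
  have cone : ∀ k, 1 < c k := fun k => by
    have : (0:ℝ) < 1 / ((k : ℝ) + 1) := by positivity
    simp only [c]; linarith
  have clim : Tendsto c atTop (𝓝 1) := by
    have := (tendsto_one_div_add_atTop_nhds_zero_nat (𝕜 := ℝ)).const_add 1
    simpa [c] using this
  filter_upwards [hlim, htr, ae_all_iff.2 fun k => hfl (c k) (cone k), 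
    ae_all_iff.2 fun k => hx k (σ (τ k)), ae_all_iff.2 fun k => Lp.coeFn_sub (w k) (h k)]
    with ω ⟨l, hl⟩ h1 h2 h3 h4
  refine ⟨l, ?_⟩
  refine tendsto_div_of_monotone_of_tendsto_div_floor_pow 
    (fun n => ∑ k ∈ Finset.range n, f (σ (τ k)) ω) l ?_ c cone clim fun K => ?_
  · exact monotone_nat_of_le_succ fun n => by
      rw [Finset.sum_range_succ]; linarith [h0 (σ (τ n)) ω]
  · have hd : Tendsto (fun k => f (σ (τ k)) ω - X k (σ (τ k)) ω + h k ω) atTop (𝓝 l) := by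
      refine hl.congr' ?_
      filter_upwards [h1] with k hk
      rw [hk]; ring
    have hfloor : Tendsto (fun i : ℕ => ⌊c K ^ i⌋₊) atTop atTop :=
      tendsto_nat_floor_atTop.comp (tendsto_pow_atTop_atTop_of_one_lt (cone K))
    have hces := (hd.cesaro).comp hfloor
    have := (h2 K).add hces
    rw [zero_add] at this
    refine this.congr fun i => ?_
    simp only [Function.comp, div_eq_inv_mul]
    rw [← mul_add, ← Finset.sum_add_distrib]
    congr 1
    refine Finset.sum_congr rfl fun k _ => ?_
    have e1 : y k ω = w k ω - h k ω := h4 k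
    have e2 : w k ω = X k (σ (τ k)) ω := h3 k
    rw [e1, e2]; ring

theorem kl_main {Ω : Type*} [MeasurableSpace Ω] (η : Measure Ω) [IsFiniteMeasure η]
    (g : ℕ → Ω → ℝ) (hm : ∀ n, Measurable (g n)) (hg : ∀ n, Integrable (g n) η)
    (hwn : ∀ φ : Ω → ℝ, Measurable φ → (∃ C : ℝ, ∀ ω, |φ ω| ≤ C) →
      Tendsto (fun n => ∫ ω, g n ω * φ ω ∂η) atTop (nhds 0)) :
    ∃ σ : ℕ → ℕ, StrictMono σ ∧
      ∀ τ : ℕ → ℕ, StrictMono τ →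
        ∀ᵐ ω ∂η, Tendsto
          (fun n : ℕ => (n : ℝ)⁻¹ * ∑ k ∈ Finset.range n, g (σ (τ k)) ω)
          atTop (nhds 0) := by
  obtain ⟨C, hC⟩ := kl_l1_bound η g hm hg hwn
  obtain ⟨σ₁, hσ₁, H₁⟩ := kl_nonneg η (fun n ω => max (g n ω) 0) 
    (fun n => (hm n).max measurable_const) (fun n => (hg n).pos_part) 
    (fun n ω => le_max_right _ _) C (fun n => (integral_mono (hg n).pos_part (hg n).abs
      fun ω => max_le (le_abs_self _) (abs_nonneg _)).trans (hC n))
  obtain ⟨σ₂, hσ₂, H₂⟩ := kl_nonneg η (fun n ω => max (-g (σ₁ n) ω) 0) 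
    (fun n => (hm _).neg.max measurable_const) (fun n => (hg _).neg_part) 
    (fun n ω => le_max_right _ _) C (fun n => (integral_mono (hg _).neg_part (hg _).abs
      fun ω => max_le (neg_le_abs _) (abs_nonneg _)).trans (hC _))
  refine ⟨σ₁ ∘ σ₂, hσ₁.comp hσ₂, fun τ hτ => ?_⟩
  refine kl_limit_zero η (fun (n : ℕ) ω => (n : ℝ)⁻¹ * ∑ k ∈ Finset.range n, g ((σ₁ ∘ σ₂) (τ k)) ω) 
    (fun n => measurable_const.mul (Finset.measurable_fun_sum _ fun k _ => hm _)) ?_ ?_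
  · intro φ hφ ⟨K, hK⟩
    have h1 := ((hwn φ hφ ⟨K, hK⟩).comp ((hσ₁.comp hσ₂).comp hτ).tendsto_atTop).cesaro
    refine h1.congr fun n => ?_
    simp only [Function.comp]
    rw [← integral_finsetSum, ← integral_const_mul]
    · congr 1
      ext ω
      rw [← Finset.sum_mul]; ring
    · intro k _
      exact (hg _).mul_bdd (c := K) hφ.aestronglyMeasurable (ae_of_all _ hK)
  · filter_upwards [H₁ (σ₂ ∘ τ) (hσ₂.comp hτ), H₂ τ hτ] with ω ⟨l₁, h₁⟩ ⟨l₂, h₂⟩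
    refine ⟨l₁ - l₂, (h₁.sub h₂).congr fun n => ?_⟩
    rw [← sub_div, ← Finset.sum_sub_distrib, div_eq_inv_mul]
    congr 1
    refine Finset.sum_congr rfl fun k _ => ?_
    simp only [Function.comp]
    rcases le_total 0 (g (σ₁ (σ₂ (τ k))) ω) with h | h
    · rw [max_eq_left h, max_eq_right (by linarith)]; ring
    · rw [max_eq_right h, max_eq_left (by linarith)]; ring

/-- Komlós-type: every weakly null sequence in `L¹(η)` has a subsequence all
of whose further subsequences have arithmetic means converging to `0` a.e. -/
theorem statement12
    {Ω : Type*} [MeasurableSpace Ω] (η : Measure Ω) [IsFiniteMeasure η]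
    (g : ℕ → Ω → ℝ) (hg : ∀ n, Integrable (g n) η)
    (hwn : ∀ φ : Ω → ℝ, Measurable φ → (∃ C : ℝ, ∀ ω, |φ ω| ≤ C) →
      Tendsto (fun n => ∫ ω, g n ω * φ ω ∂η) atTop (nhds 0)) :
    ∃ σ : ℕ → ℕ, StrictMono σ ∧
      ∀ τ : ℕ → ℕ, StrictMono τ →
        ∀ᵐ ω ∂η, Tendsto
          (fun n : ℕ => (n : ℝ)⁻¹ * ∑ k ∈ Finset.range n, g (σ (τ k)) ω)
          atTop (nhds 0) := by
  let g' : ℕ → Ω → ℝ := fun n => (hg n).1.mk (g n)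
  have e : ∀ n, g n =ᵐ[η] g' n := fun n => (hg n).1.ae_eq_mk
  obtain ⟨σ, hσ, H⟩ := kl_main η g' (fun n => (hg n).1.stronglyMeasurable_mk.measurable)
    (fun n => (hg n).congr (e n)) (fun φ hφ hb => (hwn φ hφ hb).congr fun n =>
      integral_congr_ae (by filter_upwards [e n] with ω h; rw [h]))
  refine ⟨σ, hσ, fun τ hτ => ?_⟩
  filter_upwards [H τ hτ, ae_all_iff.2 e] with ω h1 h2
  refine h1.congr fun n => ?_
  simp only [h2]

end Paper
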